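/- The Ricci tensor of the connection ∇^{s,t} satisfies: (a) for X,Y ∈ 𝔪₁, Ric^{s,t}(X,Y) = Σ_{i=1}^{d₁} ((s²t − 2s + 2st)/2)·B([[X,Xᵢ]_{𝔪₂}, Xᵢ], Y) + Σ_{k=1}^{d₂} ((s² − s²t − s)/2)·B([[X,Yₖ], Yₖ], Y) + A₁(X,Y); (b) Ric^{s,t}(X,Y) = 0 whenever X ∈ 𝔪₁ and Y ∈ 𝔪₂ or X ∈ 𝔪₂ and Y ∈ 𝔪₁; (c) for X,Y ∈ 𝔪₂, Ric^{s,t}(X,Y) = Σ_{i=1}^{d₁} (s²t − s²t² − st)·B([[X,Xᵢ], Xᵢ]_{𝔪₂}, Y) + A₂(X,Y). -/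

import Mathlib

/-!
Both sides of each Ricci identity agree term by term in the sums over the two bases.  The bracket
relations place every intermediate vector in a single summand, so each `Λ` is evaluated by one of
its four defining formulas, and each curvature vector `R(X, Z)Z` becomes a combination of iterated
brackets lying in the same summand as `X`:

* `X ∈ 𝔪₁`, `Z ∈ 𝔪₁`: `R(X, Z)Z = (s²t - 2s + 2st)/2 · [[X, Z]_𝔪₂, Z] - [[X, Z]_𝔨, Z]`,
* `X ∈ 𝔪₁`, `Z ∈ 𝔪₂`: `R(X, Z)Z = (s²t(1 - t) - st) · [[X, Z], Z]`,
* `X ∈ 𝔪₂`, `Z ∈ 𝔪₁`: `R(X, Z)Z = (s²(1 - t) - s)/2 · [[X, Z], Z]_𝔪₂`,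
* `X ∈ 𝔪₂`, `Z ∈ 𝔪₂`: `R(X, Z)Z = -[[X, Z], Z]`.

The vanishing of the mixed Ricci terms is then immediate.  The terms containing the isotropy part
`[X, Z]_𝔨` turn into `A₁` and `A₂` by invariance of the Killing form (`negKilling_lie_lie`); for `A₁` the
orthogonality of `𝔨` and `𝔪₂` is also needed, to drop the `𝔪₂`-part of `[Y, Xᵢ]`.
-/


open scoped BigOperators

/-- The negative of the Killing form, `B := −κ`. -/
noncomputable def NegKilling (𝔤 : Type*) [LieRing 𝔤] [LieAlgebra ℝ 𝔤] (X Y : 𝔤) : ℝ :=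
  - killingForm ℝ 𝔤 X Y

/-- The metric `g_t(X,Y) := B(X_{𝔪₁},Y_{𝔪₁}) + 2t·B(X_{𝔪₂},Y_{𝔪₂})` on `𝔪 = 𝔪₁ ⊕ 𝔪₂`. -/
noncomputable def gMet (𝔤 : Type*) [LieRing 𝔤] [LieAlgebra ℝ 𝔤]
    (p₁ p₂ : 𝔤 →ₗ[ℝ] 𝔤) (t : ℝ) (X Y : 𝔤) : ℝ :=
  NegKilling 𝔤 (p₁ X) (p₁ Y) + 2 * t * NegKilling 𝔤 (p₂ X) (p₂ Y)

/-- The curvature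
`R^{s,t}(X,Y)Z := Λ(X)(Λ(Y)Z) − Λ(Y)(Λ(X)Z) − Λ([X,Y]_𝔪)Z − [[X,Y]_𝔨, Z]`. -/
noncomputable def CurvST (𝔤 : Type*) [LieRing 𝔤] [LieAlgebra ℝ 𝔤]
    (Λ : 𝔤 →ₗ[ℝ] 𝔤 →ₗ[ℝ] 𝔤) (p𝔨 p₁ p₂ : 𝔤 →ₗ[ℝ] 𝔤) (X Y Z : 𝔤) : 𝔤 :=
  Λ X (Λ Y Z) - Λ Y (Λ X Z) - Λ (p₁ ⁅X, Y⁆ + p₂ ⁅X, Y⁆) Z - ⁅p𝔨 ⁅X, Y⁆, Z⁆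

/-- The Ricci tensor
`Ric^{s,t}(X,Y) := Σᵢ g_t(R^{s,t}(X,Xᵢ)Xᵢ, Y) + (1/(2t))·Σₖ g_t(R^{s,t}(X,Yₖ)Yₖ, Y)`. -/
noncomputable def RicST (𝔤 : Type*) [LieRing 𝔤] [LieAlgebra ℝ 𝔤]
    (Λ : 𝔤 →ₗ[ℝ] 𝔤 →ₗ[ℝ] 𝔤) (p𝔨 p₁ p₂ : 𝔤 →ₗ[ℝ] 𝔤) (t : ℝ)
    {d₁ d₂ : ℕ} (Xb : Fin d₁ → 𝔤) (Yb : Fin d₂ → 𝔤) (X Y : 𝔤) : ℝ :=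
  (∑ i, gMet 𝔤 p₁ p₂ t (CurvST 𝔤 Λ p𝔨 p₁ p₂ X (Xb i) (Xb i)) Y)
    + (1 / (2 * t)) * ∑ k, gMet 𝔤 p₁ p₂ t (CurvST 𝔤 Λ p𝔨 p₁ p₂ X (Yb k) (Yb k)) Y

section NegKilling

variable {𝔤 : Type*} [LieRing 𝔤] [LieAlgebra ℝ 𝔤]

theorem negKilling_smul_left (c : ℝ) (X Y : 𝔤) :
    NegKilling 𝔤 (c • X) Y = c * NegKilling 𝔤 X Y := by
  simp [NegKilling]

theorem negKilling_sub_left (X X' Y : 𝔤) :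
    NegKilling 𝔤 (X - X') Y = NegKilling 𝔤 X Y - NegKilling 𝔤 X' Y := by
  simp [NegKilling]; ring

theorem negKilling_neg_left (X Y : 𝔤) :
    NegKilling 𝔤 (-X) Y = -NegKilling 𝔤 X Y := by
  simp [NegKilling]

theorem negKilling_add_right (X Y Y' : 𝔤) :
    NegKilling 𝔤 X (Y + Y') = NegKilling 𝔤 X Y + NegKilling 𝔤 X Y' := by
  simp [NegKilling]; ring

theorem negKilling_zero_left (Y : 𝔤) : NegKilling 𝔤 0 Y = 0 := by
  simp [NegKilling]

theorem negKilling_zero_right (X : 𝔤) : NegKilling 𝔤 X 0 = 0 := by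
  simp [NegKilling]

/-- Invariance of `B`, in the form `B([W, Z], Y) = -B(W, [Y, Z])`. -/
theorem negKilling_lie_lie (W Z Y : 𝔤) :
    NegKilling 𝔤 ⁅W, Z⁆ Y = -NegKilling 𝔤 W ⁅Y, Z⁆ := by
  unfold NegKilling killingForm
  rw [LieModule.traceForm_apply_lie_apply, ← lie_skew Y Z, map_neg, neg_neg]

end NegKilling

/-- The explicit form of the Ricci tensor of the two-parameter family of
invariant metric connections `∇^{s,t}` on a homogeneous space with two isotropy summands. -/
theorem stmt_15 (𝔤 : Type*) [LieRing 𝔤] [LieAlgebra ℝ 𝔤] [FiniteDimensional ℝ 𝔤]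
    (hκ : ∀ X : 𝔤, X ≠ 0 → killingForm ℝ 𝔤 X X < 0)
    (𝔨 𝔪₁ 𝔪₂ : Submodule ℝ 𝔤)
    (h𝔪₁ : 𝔪₁ ≠ ⊥) (h𝔪₂ : 𝔪₂ ≠ ⊥)
    (p𝔨 p₁ p₂ : 𝔤 →ₗ[ℝ] 𝔤)
    (hp𝔨mem : ∀ X : 𝔤, p𝔨 X ∈ 𝔨) (hp₁mem : ∀ X : 𝔤, p₁ X ∈ 𝔪₁) (hp₂mem : ∀ X : 𝔤, p₂ X ∈ 𝔪₂)
    (hpsum : ∀ X : 𝔤, p𝔨 X + p₁ X + p₂ X = X)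
    (hid𝔨 : ∀ X ∈ 𝔨, p𝔨 X = X) (hid₁ : ∀ X ∈ 𝔪₁, p₁ X = X) (hid₂ : ∀ X ∈ 𝔪₂, p₂ X = X)
    (h𝔨p₁ : ∀ X ∈ 𝔨, p₁ X = 0) (h𝔨p₂ : ∀ X ∈ 𝔨, p₂ X = 0)
    (h₁p𝔨 : ∀ X ∈ 𝔪₁, p𝔨 X = 0) (h₁p₂ : ∀ X ∈ 𝔪₁, p₂ X = 0)
    (h₂p𝔨 : ∀ X ∈ 𝔪₂, p𝔨 X = 0) (h₂p₁ : ∀ X ∈ 𝔪₂, p₁ X = 0)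
    (horth𝔨₁ : ∀ X ∈ 𝔨, ∀ Y ∈ 𝔪₁, killingForm ℝ 𝔤 X Y = 0)
    (horth𝔨₂ : ∀ X ∈ 𝔨, ∀ Y ∈ 𝔪₂, killingForm ℝ 𝔤 X Y = 0)
    (horth₁₂ : ∀ X ∈ 𝔪₁, ∀ Y ∈ 𝔪₂, killingForm ℝ 𝔤 X Y = 0)
    (h𝔨𝔨 : ∀ X ∈ 𝔨, ∀ Y ∈ 𝔨, ⁅X, Y⁆ ∈ 𝔨)
    (hb𝔨₁ : ∀ X ∈ 𝔨, ∀ Y ∈ 𝔪₁, ⁅X, Y⁆ ∈ 𝔪₁)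
    (hb𝔨₂ : ∀ X ∈ 𝔨, ∀ Y ∈ 𝔪₂, ⁅X, Y⁆ ∈ 𝔪₂)
    (hb₁₁ : ∀ X ∈ 𝔪₁, ∀ Y ∈ 𝔪₁, ⁅X, Y⁆ ∈ 𝔨 ⊔ 𝔪₂)
    (hb₁₂ : ∀ X ∈ 𝔪₁, ∀ Y ∈ 𝔪₂, ⁅X, Y⁆ ∈ 𝔪₁)
    (hb₂₂ : ∀ X ∈ 𝔪₂, ∀ Y ∈ 𝔪₂, ⁅X, Y⁆ ∈ 𝔨)
    (s t : ℝ) (ht : 0 < t)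
    (Λ : 𝔤 →ₗ[ℝ] 𝔤 →ₗ[ℝ] 𝔤)
    (hΛ11 : ∀ X ∈ 𝔪₁, ∀ Y ∈ 𝔪₁, Λ X Y = (s / 2) • p₂ ⁅X, Y⁆)
    (hΛ12 : ∀ X ∈ 𝔪₁, ∀ Y ∈ 𝔪₂, Λ X Y = (s * t) • ⁅X, Y⁆)
    (hΛ21 : ∀ X ∈ 𝔪₂, ∀ Y ∈ 𝔪₁, Λ X Y = (s * (1 - t)) • ⁅X, Y⁆)
    (hΛ22 : ∀ X ∈ 𝔪₂, ∀ Y ∈ 𝔪₂, Λ X Y = 0)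
    (d₁ d₂ : ℕ) (Xb : Fin d₁ → 𝔤) (Yb : Fin d₂ → 𝔤)
    (hXbmem : ∀ i, Xb i ∈ 𝔪₁) (hYbmem : ∀ k, Yb k ∈ 𝔪₂)
    (hXbon : ∀ i j, NegKilling 𝔤 (Xb i) (Xb j) = if i = j then 1 else 0)
    (hYbon : ∀ k l, NegKilling 𝔤 (Yb k) (Yb l) = if k = l then 1 else 0)
    (hXbspan : Submodule.span ℝ (Set.range Xb) = 𝔪₁)
    (hYbspan : Submodule.span ℝ (Set.range Yb) = 𝔪₂) :
    (∀ X ∈ 𝔪₁, ∀ Y ∈ 𝔪₁,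
        RicST 𝔤 Λ p𝔨 p₁ p₂ t Xb Yb X Y
          = (∑ i, ((s ^ 2 * t - 2 * s + 2 * s * t) / 2)
                * NegKilling 𝔤 ⁅p₂ ⁅X, Xb i⁆, Xb i⁆ Y)
            + (∑ k, ((s ^ 2 - s ^ 2 * t - s) / 2)
                * NegKilling 𝔤 ⁅⁅X, Yb k⁆, Yb k⁆ Y)
            + ∑ i, NegKilling 𝔤 (p𝔨 ⁅X, Xb i⁆) (p𝔨 ⁅Y, Xb i⁆))
    ∧ (∀ X ∈ 𝔪₁, ∀ Y ∈ 𝔪₂, RicST 𝔤 Λ p𝔨 p₁ p₂ t Xb Yb X Y = 0)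
    ∧ (∀ X ∈ 𝔪₂, ∀ Y ∈ 𝔪₁, RicST 𝔤 Λ p𝔨 p₁ p₂ t Xb Yb X Y = 0)
    ∧ (∀ X ∈ 𝔪₂, ∀ Y ∈ 𝔪₂,
        RicST 𝔤 Λ p𝔨 p₁ p₂ t Xb Yb X Y
          = (∑ i, (s ^ 2 * t - s ^ 2 * t ^ 2 - s * t)
                * NegKilling 𝔤 (p₂ ⁅⁅X, Xb i⁆, Xb i⁆) Y)
            + ∑ k, NegKilling 𝔤 ⁅X, Yb k⁆ ⁅Y, Yb k⁆) := by
  have split₁₁ : ∀ X ∈ 𝔪₁, ∀ Z ∈ 𝔪₁, p₁ ⁅X, Z⁆ = 0 := by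
    intro X hX Z hZ
    obtain ⟨a, ha, b, hb, hab⟩ := Submodule.mem_sup.1 (hb₁₁ X hX Z hZ)
    rw [← hab, map_add, h𝔨p₁ a ha, h₂p₁ b hb, add_zero]
  have hb₂₁ : ∀ X ∈ 𝔪₂, ∀ Z ∈ 𝔪₁, ⁅X, Z⁆ ∈ 𝔪₁ := by
    intro X hX Z hZ
    rw [← lie_skew]
    exact 𝔪₁.neg_mem (hb₁₂ Z hZ X hX)
  -- `g_t` on pairs whose first entry lies in a single summand.
  have g₁ : ∀ V ∈ 𝔪₁, ∀ Y, gMet 𝔤 p₁ p₂ t V Y = NegKilling 𝔤 V (p₁ Y) := by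
    intro V hV Y
    simp [gMet, hid₁ V hV, h₁p₂ V hV, negKilling_zero_left]
  have g₂ : ∀ V ∈ 𝔪₂, ∀ Y, gMet 𝔤 p₁ p₂ t V Y = 2 * t * NegKilling 𝔤 V (p₂ Y) := by
    intro V hV Y
    simp [gMet, hid₂ V hV, h₂p₁ V hV, negKilling_zero_left]
  have R₁₁ : ∀ X ∈ 𝔪₁, ∀ Z ∈ 𝔪₁, CurvST 𝔤 Λ p𝔨 p₁ p₂ X Z Z
      = ((s ^ 2 * t - 2 * s + 2 * s * t) / 2) • ⁅p₂ ⁅X, Z⁆, Z⁆ - ⁅p𝔨 ⁅X, Z⁆, Z⁆ := by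
    intro X hX Z hZ
    rw [CurvST, hΛ11 Z hZ Z hZ, lie_self, map_zero, smul_zero, map_zero, hΛ11 X hX Z hZ, map_smul,
      hΛ12 Z hZ _ (hp₂mem _), split₁₁ X hX Z hZ, zero_add, hΛ21 _ (hp₂mem _) Z hZ,
      ← lie_skew Z (p₂ ⁅X, Z⁆)]
    module
  have R₁₂ : ∀ X ∈ 𝔪₁, ∀ Z ∈ 𝔪₂, CurvST 𝔤 Λ p𝔨 p₁ p₂ X Z Z
      = (s ^ 2 * t * (1 - t) - s * t) • ⁅⁅X, Z⁆, Z⁆ := by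
    intro X hX Z hZ
    have h := hb₁₂ X hX Z hZ
    rw [CurvST, hΛ22 Z hZ Z hZ, map_zero, hΛ12 X hX Z hZ, map_smul, hΛ21 Z hZ _ h, hid₁ _ h,
      h₁p₂ _ h, h₁p𝔨 _ h, add_zero, hΛ12 _ h Z hZ, zero_lie, ← lie_skew Z ⁅X, Z⁆]
    module
  have R₂₁ : ∀ X ∈ 𝔪₂, ∀ Z ∈ 𝔪₁, CurvST 𝔤 Λ p𝔨 p₁ p₂ X Z Z
      = ((s ^ 2 * (1 - t) - s) / 2) • p₂ ⁅⁅X, Z⁆, Z⁆ := by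
    intro X hX Z hZ
    have h := hb₂₁ X hX Z hZ
    rw [CurvST, hΛ11 Z hZ Z hZ, lie_self, map_zero, smul_zero, map_zero, hΛ21 X hX Z hZ, map_smul,
      hΛ11 Z hZ _ h, hid₁ _ h, h₁p₂ _ h, h₁p𝔨 _ h, add_zero, hΛ11 _ h Z hZ, zero_lie,
      ← lie_skew Z ⁅X, Z⁆, map_neg]
    module
  have R₂₂ : ∀ X ∈ 𝔪₂, ∀ Z ∈ 𝔪₂, CurvST 𝔤 Λ p𝔨 p₁ p₂ X Z Z = -⁅⁅X, Z⁆, Z⁆ := by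
    intro X hX Z hZ
    have h := hb₂₂ X hX Z hZ
    rw [CurvST, hΛ22 Z hZ Z hZ, hΛ22 X hX Z hZ, map_zero, map_zero, h𝔨p₁ _ h, h𝔨p₂ _ h, hid𝔨 _ h,
      add_zero, map_zero, LinearMap.zero_apply]
    module
  have M₁₁ : ∀ X ∈ 𝔪₁, ∀ Z ∈ 𝔪₁, CurvST 𝔤 Λ p𝔨 p₁ p₂ X Z Z ∈ 𝔪₁ := by
    intro X hX Z hZ
    rw [R₁₁ X hX Z hZ]
    exact 𝔪₁.sub_mem (𝔪₁.smul_mem _ (hb₂₁ _ (hp₂mem _) Z hZ)) (hb𝔨₁ _ (hp𝔨mem _) Z hZ)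
  have M₁₂ : ∀ X ∈ 𝔪₁, ∀ Z ∈ 𝔪₂, CurvST 𝔤 Λ p𝔨 p₁ p₂ X Z Z ∈ 𝔪₁ := by
    intro X hX Z hZ
    rw [R₁₂ X hX Z hZ]
    exact 𝔪₁.smul_mem _ (hb₁₂ _ (hb₁₂ X hX Z hZ) Z hZ)
  have M₂₁ : ∀ X ∈ 𝔪₂, ∀ Z ∈ 𝔪₁, CurvST 𝔤 Λ p𝔨 p₁ p₂ X Z Z ∈ 𝔪₂ := by
    intro X hX Z hZ
    rw [R₂₁ X hX Z hZ]
    exact 𝔪₂.smul_mem _ (hp₂mem _)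
  have M₂₂ : ∀ X ∈ 𝔪₂, ∀ Z ∈ 𝔪₂, CurvST 𝔤 Λ p𝔨 p₁ p₂ X Z Z ∈ 𝔪₂ := by
    intro X hX Z hZ
    rw [R₂₂ X hX Z hZ]
    exact 𝔪₂.neg_mem (hb𝔨₂ _ (hb₂₂ X hX Z hZ) Z hZ)
  refine ⟨fun X hX Y hY => ?_, fun X hX Y hY => ?_, fun X hX Y hY => ?_, fun X hX Y hY => ?_⟩
  · rw [RicST, add_right_comm, ← Finset.sum_add_distrib, Finset.mul_sum]
    congr 1
    · refine Finset.sum_congr rfl fun i _ => ?_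
      have hZ := hXbmem i
      -- Only the `𝔨`-part of `[Y, Xᵢ]` pairs with `[X, Xᵢ]_𝔨`.
      have hk : NegKilling 𝔤 (p𝔨 ⁅X, Xb i⁆) ⁅Y, Xb i⁆
          = NegKilling 𝔤 (p𝔨 ⁅X, Xb i⁆) (p𝔨 ⁅Y, Xb i⁆) := by
        conv_lhs => rw [← hpsum ⁅Y, Xb i⁆, split₁₁ Y hY _ hZ, add_zero, negKilling_add_right]
        rw [add_eq_left, NegKilling, horth𝔨₂ _ (hp𝔨mem _) _ (hp₂mem _), neg_zero]
      rw [g₁ _ (M₁₁ X hX _ hZ), hid₁ Y hY, R₁₁ X hX _ hZ, negKilling_sub_left,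
        negKilling_smul_left, negKilling_lie_lie (p𝔨 _), hk, sub_neg_eq_add]
    · refine Finset.sum_congr rfl fun k _ => ?_
      have hZ := hYbmem k
      rw [g₁ _ (M₁₂ X hX _ hZ), hid₁ Y hY, R₁₂ X hX _ hZ, negKilling_smul_left, ← mul_assoc]
      congr 1
      field_simp
  · rw [RicST, Finset.sum_eq_zero, Finset.sum_eq_zero, mul_zero, add_zero]
    · intro k _
      rw [g₁ _ (M₁₂ X hX _ (hYbmem k)), h₂p₁ Y hY, negKilling_zero_right]
    · intro i _
      rw [g₁ _ (M₁₁ X hX _ (hXbmem i)), h₂p₁ Y hY, negKilling_zero_right]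
  · rw [RicST, Finset.sum_eq_zero, Finset.sum_eq_zero, mul_zero, add_zero]
    · intro k _
      rw [g₂ _ (M₂₂ X hX _ (hYbmem k)), h₁p₂ Y hY, negKilling_zero_right, mul_zero]
    · intro i _
      rw [g₂ _ (M₂₁ X hX _ (hXbmem i)), h₁p₂ Y hY, negKilling_zero_right, mul_zero]
  · rw [RicST, Finset.mul_sum]
    congr 1
    · refine Finset.sum_congr rfl fun i _ => ?_
      have hZ := hXbmem i
      rw [g₂ _ (M₂₁ X hX _ hZ), hid₂ Y hY, R₂₁ X hX _ hZ, negKilling_smul_left]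
      ring
    · refine Finset.sum_congr rfl fun k _ => ?_
      have hZ := hYbmem k
      rw [g₂ _ (M₂₂ X hX _ hZ), hid₂ Y hY, R₂₂ X hX _ hZ, negKilling_neg_left,
        negKilling_lie_lie, neg_neg, ← mul_assoc, one_div_mul_cancel (by positivity), one_mul]
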